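/- Desargues' theorem in dimension 4 for pentachora. Let rk be a rank function satisfying (A1)–(A4) and rk X ≤ 5 for every finite set X. Let O; A, B, C, D, E; A', B', C', D', E' be points with rk{A,B,C,D,E} = 5 and rk{A',B',C',D',E'} = 5 (two pentachora), in perspective from O: for each pair (X,X') among (A,A'), (B,B'), (C,C'), (D,D'), (E,E') one has rk{O,X,X'} = 2, rk{O,X} = 2, rk{O,X'} = 2, rk{X,X'} = 2; and O is independent of each pentachoron, i.e. rk{O,W,X,Y,Z} = 5 for every four distinct vertices W, X, Y, Z of {A,B,C,D,E} and of {A',B',C',D',E'}. Let P_XY, for each of the ten pairs {X,Y} of distinct vertices of {A,B,C,D,E}, be a point with rk{X,Y,P_XY} = 2 and rk{X',Y',P_XY} = 2. Then the set of the ten points P_XY has rank 4 (they span a 3-dimensional space) and for each of the ten triangular faces {X,Y,Z} of the pentachoron one has rk{P_XY, P_XZ, P_YZ} ≤ 2. -/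

import Mathlib

/-!
Write `⟨F⟩` for the span of `F`. Perspectivity puts `O` in `⟨A, A'⟩` for corresponding vertices
`A`, `A'`. If `O` is independent of a face with vertex set `F`, the join of `⟨F⟩` and `⟨F'⟩`
therefore has rank at least `|F| + 1`. Both spans have rank at most `|F|`, so by submodularity
their common points, among them the edge points of the face, have rank at most `|F| - 1`. For
triangles this is the collinearity claim.

Now fix a vertex `A`. The point `P_AX` is not `A`, so `X` lies in `⟨A, P_AX⟩`: the points `P_AX`
together with `A` span the whole simplex, and so they are themselves independent. By
collinearity, `P_XY` lies in `⟨P_AX, P_AY⟩`, so the points `P_AX` already span all the edge points.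
-/

open Finset

/-- The axioms (A1)–(A4) of a combinatorial rank function on finite sets of points. -/
structure IsRankFunction {α : Type*} [DecidableEq α] (rk : Finset α → ℕ) : Prop where
  le_card (X : Finset α) : rk X ≤ #X
  mono : Monotone rk
  submodular (X Y : Finset α) : rk (X ∪ Y) + rk (X ∩ Y) ≤ rk X + rk Y
  singleton (p : α) : rk {p} = 1

/-- The flat spanned by `X`: the points whose insertion into `X` does not increase the rank. -/
def rkSpan {α : Type*} [DecidableEq α] (rk : Finset α → ℕ) (X : Finset α) : Set α :=
  {p | rk (insert p X) ≤ rk X}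

/-- The point `O` is independent of every face with at most `k` vertices of the simplex `V`, the
face itself being nondegenerate. -/
def IndepOfFaces {α ι : Type*} [DecidableEq α] (rk : Finset α → ℕ) (O : α) (V : ι → α)
    (k : ℕ) : Prop :=
  ∀ s : Finset ι, #s ≤ k → rk (insert O (s.image V)) = #s + 1

/-- `p` is an intersection point of the corresponding edges `V i V j` and `V' i V' j`. -/
def IsEdgePoint {α ι : Type*} [DecidableEq α] (rk : Finset α → ℕ) (V V' : ι → α)
    (i j : ι) (p : α) : Prop :=
  rk {V i, V j, p} = 2 ∧ rk {V' i, V' j, p} = 2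

/-- The families `V` and `V'` are in perspective from `O`: for each `i`, the points `O`, `V i` and
`V' i` are distinct and collinear. -/
structure InPerspective {α ι : Type*} [DecidableEq α] (rk : Finset α → ℕ) (O : α)
    (V V' : ι → α) : Prop where
  collinear (i : ι) : rk {O, V i, V' i} = 2
  center_ne_left (i : ι) : rk {O, V i} = 2
  center_ne_right (i : ι) : rk {O, V' i} = 2
  left_ne_right (i : ι) : rk {V i, V' i} = 2

section Span

variable {α : Type*} [DecidableEq α] {rk : Finset α → ℕ} {X Y Z : Finset α} {p : α}

lemma mem_rkSpan : p ∈ rkSpan rk X ↔ rk (insert p X) ≤ rk X := Iff.rfl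

lemma subset_rkSpan (X : Finset α) : (X : Set α) ⊆ rkSpan rk X := fun p hp => by
  rw [mem_rkSpan, insert_eq_of_mem (mem_coe.mp hp)]

namespace IsRankFunction

lemma mem_rkSpan_of_insert_subset (h : IsRankFunction rk) (hpX : insert p X ⊆ Y)
    (hYX : rk Y ≤ rk X) : p ∈ rkSpan rk X :=
  (h.mono hpX).trans hYX

lemma rkSpan_mono (h : IsRankFunction rk) (hXY : X ⊆ Y) : rkSpan rk X ⊆ rkSpan rk Y := by
  intro p hp
  rw [mem_rkSpan] at hp ⊢
  have hsub := h.submodular (insert p X) Y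
  rw [insert_union, union_eq_right.mpr hXY] at hsub
  have hinter : rk X ≤ rk (insert p X ∩ Y) := h.mono (subset_inter (subset_insert p X) hXY)
  lia

lemma rk_union_le_of_subset_rkSpan (h : IsRankFunction rk) (hY : (Y : Set α) ⊆ rkSpan rk X) :
    rk (X ∪ Y) ≤ rk X := by
  induction Y using Finset.induction_on with
  | empty => rw [union_empty]
  | insert p Y _ ih =>
    rw [coe_insert, Set.insert_subset_iff] at hY
    rw [union_insert]
    exact (h.rkSpan_mono subset_union_left hY.1).trans (ih hY.2)

lemma rk_le_of_subset_rkSpan (h : IsRankFunction rk) (hY : (Y : Set α) ⊆ rkSpan rk X) :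
    rk Y ≤ rk X :=
  (h.mono subset_union_right).trans (h.rk_union_le_of_subset_rkSpan hY)

lemma rkSpan_subset_rkSpan (h : IsRankFunction rk) (hY : (Y : Set α) ⊆ rkSpan rk X) :
    rkSpan rk Y ⊆ rkSpan rk X := fun _ hp =>
  h.mem_rkSpan_of_insert_subset (insert_subset_insert _ subset_union_left)
    (le_trans (h.rkSpan_mono subset_union_right hp) (h.rk_union_le_of_subset_rkSpan hY))

lemma rk_union_add_le_of_subset_rkSpan (h : IsRankFunction rk) (hX : (Z : Set α) ⊆ rkSpan rk X)
    (hY : (Z : Set α) ⊆ rkSpan rk Y) : rk (X ∪ Y) + rk Z ≤ rk X + rk Y :=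
  calc
    rk (X ∪ Y) + rk Z ≤ rk ((X ∪ Z) ∪ (Y ∪ Z)) + rk ((X ∪ Z) ∩ (Y ∪ Z)) :=
      add_le_add (h.mono (union_subset_union subset_union_left subset_union_left))
        (h.mono (subset_inter subset_union_right subset_union_right))
    _ ≤ rk (X ∪ Z) + rk (Y ∪ Z) := h.submodular _ _
    _ ≤ rk X + rk Y :=
      add_le_add (h.rk_union_le_of_subset_rkSpan hX) (h.rk_union_le_of_subset_rkSpan hY)

lemma rk_union_le_add_card (h : IsRankFunction rk) (X Y : Finset α) :
    rk (X ∪ Y) ≤ rk X + #Y :=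
  (Nat.le_add_right _ _).trans ((h.submodular X Y).trans (Nat.add_le_add_left (h.le_card Y) _))

lemma rk_insert_le (h : IsRankFunction rk) (p : α) (X : Finset α) :
    rk (insert p X) ≤ rk X + 1 := by
  simpa [union_comm X {p}, ← insert_eq] using h.rk_union_le_add_card X {p}

lemma rk_pair_le (h : IsRankFunction rk) (p q : α) : rk {p, q} ≤ 2 :=
  (h.le_card _).trans card_le_two

lemma rk_pair_eq_two (h : IsRankFunction rk) {p q : α} (hp : p ∉ rkSpan rk {q}) :
    rk {p, q} = 2 := by
  have hlt : rk {q} < rk {p, q} := not_le.mp hp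
  have := h.singleton q
  have := h.rk_pair_le p q
  lia

end IsRankFunction

end Span

section Perspective

variable {α ι : Type*} [DecidableEq α] {rk : Finset α → ℕ} {O : α} {V V' : ι → α} {k : ℕ}

namespace InPerspective

lemma symm (hV : InPerspective rk O V V') : InPerspective rk O V' V where
  collinear i := by rw [pair_comm, hV.collinear]
  center_ne_left := hV.center_ne_right
  center_ne_right := hV.center_ne_left
  left_ne_right i := by rw [pair_comm, hV.left_ne_right]

lemma center_mem_rkSpan (hV : InPerspective rk O V V') (i : ι) :
    O ∈ rkSpan rk {V i, V' i} :=
  (hV.collinear i).trans_le (hV.left_ne_right i).ge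

lemma right_mem_rkSpan (h : IsRankFunction rk) (hV : InPerspective rk O V V') (i : ι) :
    V' i ∈ rkSpan rk {O, V i} :=
  h.mem_rkSpan_of_insert_subset (Y := {O, V i, V' i}) (by grind)
    ((hV.collinear i).trans_le (hV.center_ne_left i).ge)

lemma rk_insert_center_image_le (h : IsRankFunction rk) (hV : InPerspective rk O V V')
    (s : Finset ι) : rk (insert O (s.image V')) ≤ rk (insert O (s.image V)) := by
  refine h.rk_le_of_subset_rkSpan ?_
  rw [coe_insert, coe_image, Set.insert_subset_iff, Set.image_subset_iff]
  refine ⟨subset_rkSpan _ (by simp), fun i hi => ?_⟩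
  exact h.rkSpan_mono (by grind) (hV.right_mem_rkSpan h i)

end InPerspective

namespace IndepOfFaces

lemma mono {m : ℕ} (hO : IndepOfFaces rk O V k) (hmk : m ≤ k) : IndepOfFaces rk O V m :=
  fun s hs => hO s (hs.trans hmk)

lemma of_facets [Fintype ι] [DecidableEq ι] (h : IsRankFunction rk)
    (hO : ∀ i, rk (insert O ((univ.erase i).image V)) = Fintype.card ι)
    (hk : k < Fintype.card ι) : IndepOfFaces rk O V k := by
  intro s hs
  obtain ⟨i, -, his⟩ := exists_mem_notMem_of_card_lt_card (hs.trans_lt hk)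
  have hsplit : s ∪ univ.erase i \ s = univ.erase i :=
    union_sdiff_of_subset fun j hj => by grind
  have hcard : #s + #(univ.erase i \ s) + 1 = Fintype.card ι := by
    rw [← card_union_of_disjoint disjoint_sdiff, hsplit, card_erase_add_one (mem_univ i), card_univ]
  have hle := h.rk_union_le_add_card (insert O (s.image V)) ((univ.erase i \ s).image V)
  rw [insert_union, ← image_union, hsplit, hO i] at hle
  have hrest : #((univ.erase i \ s).image V) ≤ #(univ.erase i \ s) := card_image_le
  have hface : #(insert O (s.image V)) ≤ #s + 1 :=
    (card_insert_le _ _).trans (Nat.add_le_add_right card_image_le 1)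
  have := h.le_card (insert O (s.image V))
  lia

lemma of_inPerspective (hO : IndepOfFaces rk O V k) (h : IsRankFunction rk)
    (hV : InPerspective rk O V V') : IndepOfFaces rk O V' k := fun s hs => by
  rw [← hO s hs]
  exact (hV.rk_insert_center_image_le h s).antisymm (hV.symm.rk_insert_center_image_le h s)

lemma rk_image (hO : IndepOfFaces rk O V k) (h : IsRankFunction rk) {s : Finset ι}
    (hs : #s ≤ k) : rk (s.image V) = #s := by
  have := hO s hs
  have := h.rk_insert_le O (s.image V)
  have := h.le_card (s.image V)
  have : #(s.image V) ≤ #s := card_image_le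
  lia

lemma notMem_rkSpan (hO : IndepOfFaces rk O V k) (h : IsRankFunction rk) {s : Finset ι}
    (hs : #s ≤ k) : O ∉ rkSpan rk (s.image V) := by
  rw [mem_rkSpan, hO s hs, hO.rk_image h hs]
  lia

lemma rk_pair (hO : IndepOfFaces rk O V k) (h : IsRankFunction rk) (hk : 2 ≤ k) {i j : ι}
    (hij : i ≠ j) : rk {V i, V j} = 2 := by
  classical
  simpa [card_pair hij] using hO.rk_image h (s := {i, j}) (by rwa [card_pair hij])

end IndepOfFaces

lemma rk_lt_card_of_subset_rkSpan_image (h : IsRankFunction rk) (hV : InPerspective rk O V V')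
    {s : Finset ι} (hs : s.Nonempty) (hO : rk (insert O (s.image V)) = #s + 1) {Z : Finset α}
    (hZ : (Z : Set α) ⊆ rkSpan rk (s.image V)) (hZ' : (Z : Set α) ⊆ rkSpan rk (s.image V')) :
    rk Z < #s := by
  obtain ⟨i, hi⟩ := hs
  have hcenter : O ∈ rkSpan rk (s.image V ∪ s.image V') :=
    h.rkSpan_mono (by grind) (hV.center_mem_rkSpan i)
  have hjoin : #s + 1 ≤ rk (s.image V ∪ s.image V') := by
    rw [← hO]
    refine h.rk_le_of_subset_rkSpan ?_
    rw [coe_insert]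
    exact Set.insert_subset hcenter
      ((subset_rkSpan _).trans (h.rkSpan_mono subset_union_left))
  have hmod := h.rk_union_add_le_of_subset_rkSpan hZ hZ'
  have hface : rk (s.image V) ≤ #s := (h.le_card _).trans card_image_le
  have hface' : rk (s.image V') ≤ #s := (h.le_card _).trans card_image_le
  lia

end Perspective

section EdgePoints

variable {α ι : Type*} [DecidableEq α] {rk : Finset α → ℕ} {O : α} {V V' : ι → α} {i j l : ι}
  {p q r : α}

namespace IsEdgePoint

lemma symm (hp : IsEdgePoint rk V V' i j p) : IsEdgePoint rk V' V i j p := And.symm hp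

lemma mem_rkSpan (hp : IsEdgePoint rk V V' i j p) (h : IsRankFunction rk)
    (hij : rk {V i, V j} = 2) : p ∈ rkSpan rk {V i, V j} :=
  h.mem_rkSpan_of_insert_subset (Y := {V i, V j, p}) (by grind) (hp.1.trans_le hij.ge)

lemma rk_pair_left_vertex (hp : IsEdgePoint rk V V' i j p) (h : IsRankFunction rk)
    (hV : InPerspective rk O V V') (hO : IndepOfFaces rk O V 2) (hij : i ≠ j) :
    rk {V i, p} = 2 := by
  classical
  have hO' := hO.of_inPerspective h hV
  refine h.rk_pair_eq_two fun hVp => ?_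
  have hp' : p ∈ rkSpan rk {V' i, V' j} := hp.symm.mem_rkSpan h (hO'.rk_pair h le_rfl hij)
  have hVi : V i ∈ rkSpan rk {V' i, V' j} :=
    h.rkSpan_subset_rkSpan (by simpa using hp') hVp
  have hVi' : V' i ∈ rkSpan rk {V' i, V' j} := subset_rkSpan _ (by simp)
  have hcenter : O ∈ rkSpan rk {V' i, V' j} :=
    h.rkSpan_subset_rkSpan (by simp [Set.insert_subset_iff, hVi, hVi']) (hV.center_mem_rkSpan i)
  exact hO'.notMem_rkSpan h (s := {i, j}) card_le_two (by simpa using hcenter)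

lemma right_vertex_mem_rkSpan (hp : IsEdgePoint rk V V' i j p) (h : IsRankFunction rk)
    (hV : InPerspective rk O V V') (hO : IndepOfFaces rk O V 2) (hij : i ≠ j) :
    V j ∈ rkSpan rk {V i, p} :=
  h.mem_rkSpan_of_insert_subset (Y := {V i, V j, p}) (by grind)
    (hp.1.trans_le (hp.rk_pair_left_vertex h hV hO hij).ge)

lemma subset_rkSpan_triangle (hp : IsEdgePoint rk V V' i j p) (hq : IsEdgePoint rk V V' i l q)
    (hr : IsEdgePoint rk V V' j l r) (h : IsRankFunction rk) (hO : IndepOfFaces rk O V 3)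
    (hij : i ≠ j) (hil : i ≠ l) (hjl : j ≠ l) :
    ({p, q, r} : Set α) ⊆ rkSpan rk {V i, V j, V l} := by
  have hpair {a b : ι} (hab : a ≠ b) : rk {V a, V b} = 2 := hO.rk_pair h (by lia) hab
  rintro x (rfl | rfl | rfl)
  · exact h.rkSpan_mono (by grind) (hp.mem_rkSpan h (hpair hij))
  · exact h.rkSpan_mono (by grind) (hq.mem_rkSpan h (hpair hil))
  · exact h.rkSpan_mono (by grind) (hr.mem_rkSpan h (hpair hjl))

theorem rk_triangle_le_two (hp : IsEdgePoint rk V V' i j p) (hq : IsEdgePoint rk V V' i l q)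
    (hr : IsEdgePoint rk V V' j l r) (h : IsRankFunction rk) (hV : InPerspective rk O V V')
    (hO : IndepOfFaces rk O V 3) (hij : i ≠ j) (hil : i ≠ l) (hjl : j ≠ l) :
    rk {p, q, r} ≤ 2 := by
  classical
  have hcard : #{i, j, l} = 3 := card_eq_three.mpr ⟨i, j, l, hij, hil, hjl, rfl⟩
  have hspan := hp.subset_rkSpan_triangle hq hr h hO hij hil hjl
  have hspan' := hp.symm.subset_rkSpan_triangle hq.symm hr.symm h (hO.of_inPerspective h hV)
    hij hil hjl
  have hlt : rk {p, q, r} < #{i, j, l} :=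
    rk_lt_card_of_subset_rkSpan_image h hV ⟨i, by simp⟩ (hO _ hcard.le)
      (by simpa using hspan) (by simpa using hspan')
  lia

end IsEdgePoint

section VertexFigure

variable {P : ι → α}

lemma rk_insert_image_le_rk_edgePoints_add_one (h : IsRankFunction rk)
    (hV : InPerspective rk O V V') (hO : IndepOfFaces rk O V 2) {t : Finset ι}
    (hit : i ∉ t) (hP : ∀ j ∈ t, IsEdgePoint rk V V' i j (P j)) :
    rk (insert (V i) (t.image V)) ≤ rk (t.image P) + 1 := by
  refine (h.rk_le_of_subset_rkSpan ?_).trans (h.rk_insert_le (V i) (t.image P))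
  rw [coe_insert, coe_image, Set.insert_subset_iff, Set.image_subset_iff]
  refine ⟨subset_rkSpan _ (by simp), fun j hj => ?_⟩
  have hij : i ≠ j := fun hij => hit (hij ▸ hj)
  exact h.rkSpan_mono (by grind) ((hP j hj).right_vertex_mem_rkSpan h hV hO hij)

lemma rk_edgePoints_pair (h : IsRankFunction rk) (hV : InPerspective rk O V V')
    (hO : IndepOfFaces rk O V 3) (hj : IsEdgePoint rk V V' i j (P j))
    (hl : IsEdgePoint rk V V' i l (P l)) (hij : i ≠ j) (hil : i ≠ l) (hjl : j ≠ l) :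
    rk {P j, P l} = 2 := by
  classical
  have hcard : #{i, j, l} = 3 := card_eq_three.mpr ⟨i, j, l, hij, hil, hjl, rfl⟩
  have htriangle : rk {V i, V j, V l} = 3 := by
    simpa [hcard] using hO.rk_image h (s := {i, j, l}) hcard.le
  have hle : rk {V i, V j, V l} ≤ rk {P j, P l} + 1 := by
    simpa using rk_insert_image_le_rk_edgePoints_add_one h hV (hO.mono (by lia)) (t := {j, l})
      (by simp [hij, hil]) (by simp [hj, hl])
  have := h.rk_pair_le (P j) (P l)
  lia

lemma edgePoint_mem_rkSpan_pair (h : IsRankFunction rk) (hV : InPerspective rk O V V')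
    (hO : IndepOfFaces rk O V 3) (hj : IsEdgePoint rk V V' i j (P j))
    (hl : IsEdgePoint rk V V' i l (P l)) (hr : IsEdgePoint rk V V' j l r)
    (hij : i ≠ j) (hil : i ≠ l) (hjl : j ≠ l) : r ∈ rkSpan rk {P j, P l} :=
  h.mem_rkSpan_of_insert_subset (Y := {P j, P l, r}) (by grind)
    ((hj.rk_triangle_le_two hl hr h hV hO hij hil hjl).trans
      (rk_edgePoints_pair h hV hO hj hl hij hil hjl).ge)

lemma rk_edgePoints_at_vertex_add_one [Fintype ι] [DecidableEq ι] (h : IsRankFunction rk)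
    (hV : InPerspective rk O V V') (hO : IndepOfFaces rk O V 2)
    (hsimplex : rk (univ.image V) = Fintype.card ι)
    (hP : ∀ j, j ≠ i → IsEdgePoint rk V V' i j (P j)) :
    rk ((univ.erase i).image P) + 1 = Fintype.card ι := by
  have hlower : Fintype.card ι ≤ rk ((univ.erase i).image P) + 1 := by
    rw [← hsimplex, ← insert_erase (mem_univ i), image_insert]
    simpa using rk_insert_image_le_rk_edgePoints_add_one h hV hO (notMem_erase i univ)
      fun j hj => hP j (ne_of_mem_erase hj)
  have hupper : rk ((univ.erase i).image P) ≤ #(univ.erase i) :=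
    (h.le_card _).trans card_image_le
  have := card_erase_add_one (mem_univ i)
  rw [card_univ] at this
  lia

end VertexFigure

end EdgePoints

theorem stmt_12_general {α : Type*} [DecidableEq α] {n : ℕ} {rk : Finset α → ℕ}
    (h : IsRankFunction rk) {O : α} {V V' : Fin (n + 1) → α} (hV : InPerspective rk O V V')
    (hO : IndepOfFaces rk O V 3) (hsimplex : rk (univ.image V) = n + 1)
    {P : Fin (n + 1) → Fin (n + 1) → α}
    (hP : ∀ i j, i < j → IsEdgePoint rk V V' i j (P i j)) :
    rk (univ.biUnion fun i => (Ioi i).image (P i)) = n ∧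
      ∀ i j l, i < j → j < l → rk {P i j, P i l, P j l} ≤ 2 := by
  refine ⟨?_, fun i j l hij hjl => (hP i j hij).rk_triangle_le_two (hP i l (hij.trans hjl))
    (hP j l hjl) h hV hO hij.ne (hij.trans hjl).ne hjl.ne⟩
  have hbase : rk ((univ.erase 0).image (P 0)) + 1 = n + 1 := by
    simpa using rk_edgePoints_at_vertex_add_one h hV (hO.mono (by lia)) (by simpa using hsimplex)
      fun j hj => hP 0 j (Fin.pos_of_ne_zero hj)
  refine (le_antisymm (h.rk_le_of_subset_rkSpan ?_) (h.mono ?_)).trans (Nat.add_right_cancel hbase)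
  · intro x hx
    obtain ⟨i, -, hx⟩ := mem_biUnion.mp hx
    obtain ⟨j, hij, rfl⟩ := mem_image.mp hx
    rw [mem_Ioi] at hij
    rcases eq_or_ne i 0 with rfl | hi
    · exact subset_rkSpan _ (by grind)
    have hi : 0 < i := Fin.pos_of_ne_zero hi
    have hj : 0 < j := hi.trans hij
    exact h.rkSpan_mono (by grind) (edgePoint_mem_rkSpan_pair h hV hO (hP 0 i hi) (hP 0 j hj)
      (hP i j hij) hi.ne hj.ne hij.ne)
  · exact (image_subset_image fun j hj => mem_Ioi.mpr
      (Fin.pos_of_ne_zero (ne_of_mem_erase hj))).trans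
        (subset_biUnion_of_mem (fun i => (Ioi i).image (P i)) (mem_univ 0))

/-- Desargues' theorem in dimension 4 for pentachora: the ten
intersection points of corresponding edges of two pentachora in perspective
from a point span a 3-dimensional space, and the three points coming from
each triangular face are collinear. -/
theorem stmt_12 {Pt : Type*} [DecidableEq Pt] (rk : Finset Pt → ℕ)
    (hA1 : ∀ X : Finset Pt, rk X ≤ X.card)
    (hA2 : ∀ X Y : Finset Pt, X ⊆ Y → rk X ≤ rk Y)
    (hA3 : ∀ X Y : Finset Pt, rk (X ∪ Y) + rk (X ∩ Y) ≤ rk X + rk Y)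
    (hA4 : ∀ p : Pt, rk {p} = 1)
    (hdim : ∀ X : Finset Pt, rk X ≤ 5)
    (O A B C D E A' B' C' D' E' : Pt)
    (P_AB P_AC P_AD P_AE P_BC P_BD P_BE P_CD P_CE P_DE : Pt)
    -- the two pentachora
    (hT : rk {A, B, C, D, E} = 5)
    (hT' : rk {A', B', C', D', E'} = 5)
    -- perspective from O
    (hOAA' : rk {O, A, A'} = 2) (hOA : rk {O, A} = 2) (hOA' : rk {O, A'} = 2) (hAA' : rk {A, A'} = 2)
    (hOBB' : rk {O, B, B'} = 2) (hOB : rk {O, B} = 2) (hOB' : rk {O, B'} = 2) (hBB' : rk {B, B'} = 2)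
    (hOCC' : rk {O, C, C'} = 2) (hOC : rk {O, C} = 2) (hOC' : rk {O, C'} = 2) (hCC' : rk {C, C'} = 2)
    (hODD' : rk {O, D, D'} = 2) (hOD : rk {O, D} = 2) (hOD' : rk {O, D'} = 2) (hDD' : rk {D, D'} = 2)
    (hOEE' : rk {O, E, E'} = 2) (hOE : rk {O, E} = 2) (hOE' : rk {O, E'} = 2) (hEE' : rk {E, E'} = 2)
    -- O is independent of each pentachoron
    (hO1 : rk {O, A, B, C, D} = 5) (hO2 : rk {O, A, B, C, E} = 5)
    (hO3 : rk {O, A, B, D, E} = 5) (hO4 : rk {O, A, C, D, E} = 5)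
    (hO5 : rk {O, B, C, D, E} = 5)
    (hO1' : rk {O, A', B', C', D'} = 5) (hO2' : rk {O, A', B', C', E'} = 5)
    (hO3' : rk {O, A', B', D', E'} = 5) (hO4' : rk {O, A', C', D', E'} = 5)
    (hO5' : rk {O, B', C', D', E'} = 5)
    -- intersection points of corresponding edges
    (hPAB : rk {A, B, P_AB} = 2) (hPAB' : rk {A', B', P_AB} = 2)
    (hPAC : rk {A, C, P_AC} = 2) (hPAC' : rk {A', C', P_AC} = 2)
    (hPAD : rk {A, D, P_AD} = 2) (hPAD' : rk {A', D', P_AD} = 2)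
    (hPAE : rk {A, E, P_AE} = 2) (hPAE' : rk {A', E', P_AE} = 2)
    (hPBC : rk {B, C, P_BC} = 2) (hPBC' : rk {B', C', P_BC} = 2)
    (hPBD : rk {B, D, P_BD} = 2) (hPBD' : rk {B', D', P_BD} = 2)
    (hPBE : rk {B, E, P_BE} = 2) (hPBE' : rk {B', E', P_BE} = 2)
    (hPCD : rk {C, D, P_CD} = 2) (hPCD' : rk {C', D', P_CD} = 2)
    (hPCE : rk {C, E, P_CE} = 2) (hPCE' : rk {C', E', P_CE} = 2)
    (hPDE : rk {D, E, P_DE} = 2) (hPDE' : rk {D', E', P_DE} = 2) :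
    rk {P_AB, P_AC, P_AD, P_AE, P_BC, P_BD, P_BE, P_CD, P_CE, P_DE} = 4 ∧
    rk {P_AB, P_AC, P_BC} ≤ 2 ∧
    rk {P_AB, P_AD, P_BD} ≤ 2 ∧
    rk {P_AB, P_AE, P_BE} ≤ 2 ∧
    rk {P_AC, P_AD, P_CD} ≤ 2 ∧
    rk {P_AC, P_AE, P_CE} ≤ 2 ∧
    rk {P_AD, P_AE, P_DE} ≤ 2 ∧
    rk {P_BC, P_BD, P_CD} ≤ 2 ∧
    rk {P_BC, P_BE, P_CE} ≤ 2 ∧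
    rk {P_BD, P_BE, P_DE} ≤ 2 ∧
    rk {P_CD, P_CE, P_DE} ≤ 2 := by
  -- Only the entries above the diagonal matter.
  let P : Fin 5 → Fin 5 → Pt := ![![O, P_AB, P_AC, P_AD, P_AE], ![O, O, P_BC, P_BD, P_BE],
    ![O, O, O, P_CD, P_CE], ![O, O, O, O, P_DE], ![O, O, O, O, O]]
  let V : Fin 5 → Pt := ![A, B, C, D, E]
  let V' : Fin 5 → Pt := ![A', B', C', D', E']
  have h : IsRankFunction rk := ⟨hA1, hA2, hA3, hA4⟩
  have hV : InPerspective rk O V V' := by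
    constructor <;> simp [Fin.forall_fin_succ, V, V', *]
  have hfacets (i : Fin 5) : rk (insert O ((univ.erase i).image V)) = 5 := by
    fin_cases i <;> simpa [Fin.univ_succ, erase_insert_of_ne, V]
  have hO : IndepOfFaces rk O V 3 := .of_facets h hfacets (by simp)
  have hsimplex : rk (univ.image V) = 5 := by simpa [Fin.univ_succ, V] using hT
  have hP : ∀ i j, i < j → IsEdgePoint rk V V' i j (P i j) := by
    simp [Fin.forall_fin_succ, IsEdgePoint, V, V', P, *]
  obtain ⟨hspan, hcollinear⟩ := stmt_12_general h hV hO hsimplex hP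
  constructor
  · convert hspan using 2
    ext x
    simp [Fin.exists_fin_succ, P, or_assoc, eq_comm]
  · simpa [Fin.forall_fin_succ, P, and_assoc] using hcollinear
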